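/- For all positive integers a and b, the graph G(a,b) satisfies inf over edges x∼y of κ_LLY(x,y) = 1, has diameter 2, and is therefore Bonnet-Myers sharp. -/

import Mathlib

open scoped Classical
open Finset

noncomputable section

/-- The degree of a vertex `x` in the graph `G`. -/
def deg {V : Type*} [Fintype V] (G : SimpleGraph V) (x : V) : ℕ :=
  (Finset.univ.filter (fun y => G.Adj x y)).card

/-- The diameter of `G`: the maximum of the combinatorial distance over all pairs of vertices. -/
def diam {V : Type*} [Fintype V] (G : SimpleGraph V) : ℕ :=
  Finset.univ.sup (fun xy : V × V => G.dist xy.1 xy.2)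

/-- The probability measure `μ_x^p` of the lazy simple random walk at `x` with idleness `p`. -/
def mu {V : Type*} [Fintype V] (G : SimpleGraph V) (p : ℝ) (x : V) : V → ℝ :=
  fun z => if z = x then p else if G.Adj x z then (1 - p) / (deg G x : ℝ) else 0

/-- The Wasserstein distance `W₁(μ₁, μ₂)` with respect to the combinatorial distance of `G`:
the infimum of the total transport cost over all transport plans from `μ₁` to `μ₂`. -/
def W1 {V : Type*} [Fintype V] (G : SimpleGraph V) (μ₁ μ₂ : V → ℝ) : ℝ :=
  sInf {c : ℝ | ∃ π : V → V → ℝ,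
    (∀ x y, 0 ≤ π x y ∧ π x y ≤ 1) ∧
    (∀ x, ∑ y, π x y = μ₁ x) ∧
    (∀ y, ∑ x, π x y = μ₂ y) ∧
    c = ∑ x, ∑ y, (G.dist x y : ℝ) * π x y}

/-- The `p`-Ollivier-Ricci curvature `κ_p(x,y) = 1 - W₁(μ_x^p, μ_y^p)`. -/
def kappa {V : Type*} [Fintype V] (G : SimpleGraph V) (p : ℝ) (x y : V) : ℝ :=
  1 - W1 G (mu G p x) (mu G p y)

/-- The Lin-Lu-Yau curvature `κ_LLY(x,y) = lim_{p→1} κ_p(x,y)/(1-p)`. -/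
def kappaLLY {V : Type*} [Fintype V] (G : SimpleGraph V) (x y : V) : ℝ :=
  Filter.limUnder (nhdsWithin 1 (Set.Iio 1)) (fun p => kappa G p x y / (1 - p))

/-- `G` is Bonnet-Myers sharp if the infimum of `κ_LLY` over the edges equals `2/diam(G)`. -/
def BMSharp {V : Type*} [Fintype V] (G : SimpleGraph V) : Prop :=
  sInf {r : ℝ | ∃ x y, G.Adj x y ∧ r = kappaLLY G x y} = 2 / (diam G : ℝ)

/-- `G` is obtained from the complete graph on its vertex set by deleting a matching
(a set of pairwise disjoint edges, encoded as a symmetric irreflexive relation in which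
every vertex has at most one partner). -/
def IsMatchingDeletionOfComplete {V : Type*} (G : SimpleGraph V) : Prop :=
  ∃ M : V → V → Prop, Symmetric M ∧ (∀ x, ¬ M x x) ∧
    (∀ x y z, M x y → M x z → y = z) ∧
    (∀ x y, G.Adj x y ↔ x ≠ y ∧ ¬ M x y)

/-- The graph `G(a,b)` on `2a+b` vertices `u_1, …, u_{2a}, v_1, …, v_b` (encoded as
`Fin (2a+b)`, with `u_i` the index `i-1` and `v_j` the index `2a+j-1`), in which two distinct
vertices are adjacent unless they form a pair `{u_{2i-1}, u_{2i}}`, i.e. `G(a,b)` is the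
complete graph `K_{2a+b}` with a matching of size `a` deleted. -/
def Gab (a b : ℕ) : SimpleGraph (Fin (2*a+b)) where
  Adj x y := x ≠ y ∧ ¬((x : ℕ) < 2*a ∧ (y : ℕ) < 2*a ∧ (x : ℕ)/2 = (y : ℕ)/2)
  symm := by
    constructor
    intro x y h
    exact ⟨h.1.symm, fun hc => h.2 ⟨hc.2.1, hc.1, hc.2.2.symm⟩⟩
  loopless := by constructor; intro x h; exact h.1 rfl

/-- The antitree `AT(a_1, …, a_N)` on the disjoint union of sets `V_1, …, V_N` with
`|V_k| = a_k` (0-indexed here: `V_k` is `Fin (a k)` for `k : Fin N`): two distinct vertices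
are adjacent iff they lie in the same set or in consecutive sets. -/
def antitree (N : ℕ) (a : Fin N → ℕ) : SimpleGraph (Σ k : Fin N, Fin (a k)) where
  Adj x y := x ≠ y ∧
    ((x.1 : ℕ) = (y.1 : ℕ) ∨ (x.1 : ℕ) + 1 = (y.1 : ℕ) ∨ (y.1 : ℕ) + 1 = (x.1 : ℕ))
  symm := by
    constructor
    intro x y h
    refine ⟨h.1.symm, ?_⟩
    rcases h.2 with h2 | h2 | h2
    · exact Or.inl h2.symm
    · exact Or.inr (Or.inr h2)
    · exact Or.inr (Or.inl h2)
  loopless := by constructor; intro x h; exact h.1 rfl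

/-!
If `μ` dominates `ν` away from a vertex `v`, an optimal plan sends all of the excess to `v`, and its
cost is read off the Kantorovich potential `dist · v`. The same holds if domination is first
restored by moving some mass from `x` to a vertex `y` on a geodesic from `x` to `v`, since the
potential is tight along such moves.

Let `G` be a connected complete graph minus a matching. If `x` has a partner `x'`, every other vertex
is adjacent to both, so `dist · x'` equals `1`, except that it is `2` at `x` and `0` at `x'`. For an
edge `xy`, the plan with sink `v = x'` gives `W₁(μ_x^p, μ_y^p) = p` for `p` near `1`, whence curvature
`1`. If neither end of the edge has a partner, they are twins, and the plan with sink `y` gives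
curvature `1 + 1 / deg x`.
-/

section Transport

variable {V : Type*} [Fintype V] {G : SimpleGraph V} {μ ν f : V → ℝ} {π : V → V → ℝ}

/-- The transport plans from `μ` to `ν` admitted in `W1`, i.e. the couplings of `μ` and `ν`. -/
structure IsTransportPlan (μ ν : V → ℝ) (π : V → V → ℝ) : Prop where
  mem_unitInterval : ∀ x y, 0 ≤ π x y ∧ π x y ≤ 1
  sum_right : ∀ x, ∑ y, π x y = μ x
  sum_left : ∀ y, ∑ x, π x y = ν y

/-- The total cost of a transport plan `π` when moving unit mass from `x` to `y` costs
`G.dist x y`. -/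
def transportCost (G : SimpleGraph V) (π : V → V → ℝ) : ℝ :=
  ∑ x, ∑ y, (G.dist x y : ℝ) * π x y

lemma W1_eq_sInf_image (G : SimpleGraph V) (μ ν : V → ℝ) :
    W1 G μ ν = sInf (transportCost G '' {π | IsTransportPlan μ ν π}) := by
  refine congrArg sInf (Set.ext fun c => ?_)
  constructor
  · rintro ⟨π, hmem, hright, hleft, rfl⟩
    exact ⟨π, ⟨hmem, hright, hleft⟩, rfl⟩
  · rintro ⟨π, hπ, rfl⟩
    exact ⟨π, hπ.mem_unitInterval, hπ.sum_right, hπ.sum_left, rfl⟩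

lemma IsTransportPlan.swap (hπ : IsTransportPlan μ ν π) :
    IsTransportPlan ν μ (Function.swap π) :=
  ⟨fun x y => hπ.mem_unitInterval y x, hπ.sum_left, hπ.sum_right⟩

lemma transportCost_swap (G : SimpleGraph V) (π : V → V → ℝ) :
    transportCost G (Function.swap π) = transportCost G π := by
  unfold transportCost
  rw [sum_comm]
  simp only [Function.swap, G.dist_comm]

lemma W1_comm (G : SimpleGraph V) (μ ν : V → ℝ) : W1 G μ ν = W1 G ν μ := by
  rw [W1_eq_sInf_image, W1_eq_sInf_image]
  congr 1
  ext c
  constructor <;>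
  · rintro ⟨π, hπ, rfl⟩
    exact ⟨_, hπ.swap, transportCost_swap G π⟩

lemma IsTransportPlan.sum_potential_mul_sub (hπ : IsTransportPlan μ ν π) (f : V → ℝ) :
    ∑ x, f x * (μ x - ν x) = ∑ x, ∑ y, (f x - f y) * π x y := by
  have hμ : ∑ x, f x * μ x = ∑ x, ∑ y, f x * π x y := by
    simp only [← hπ.sum_right, mul_sum]
  have hν : ∑ y, f y * ν y = ∑ x, ∑ y, f y * π x y := by
    rw [sum_comm]
    simp only [← hπ.sum_left, mul_sum]
  simp only [mul_sub, sub_mul, sum_sub_distrib, hμ, hν]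

lemma IsTransportPlan.sum_potential_mul_sub_le (hπ : IsTransportPlan μ ν π)
    (hf : ∀ x y, f x - f y ≤ G.dist x y) :
    ∑ x, f x * (μ x - ν x) ≤ transportCost G π := by
  rw [hπ.sum_potential_mul_sub]
  exact sum_le_sum fun x _ => sum_le_sum fun y _ =>
    mul_le_mul_of_nonneg_right (hf x y) (hπ.mem_unitInterval x y).1

theorem IsTransportPlan.W1_eq_of_tight (hπ : IsTransportPlan μ ν π)
    (hf : ∀ x y, f x - f y ≤ G.dist x y)
    (htight : ∀ x y, π x y ≠ 0 → f x - f y = G.dist x y) :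
    W1 G μ ν = ∑ x, f x * (μ x - ν x) := by
  have hcost : transportCost G π = ∑ x, f x * (μ x - ν x) := by
    rw [hπ.sum_potential_mul_sub]
    refine sum_congr rfl fun x _ => sum_congr rfl fun y _ => ?_
    by_cases h : π x y = 0
    · simp only [h, mul_zero]
    · rw [htight x y h]
  rw [W1_eq_sInf_image]
  refine IsLeast.csInf_eq ⟨⟨π, hπ, hcost⟩, ?_⟩
  rintro _ ⟨π', hπ', rfl⟩
  exact hπ'.sum_potential_mul_sub_le hf

/-- The plan that moves mass `ρ x y` from `x` to `y` and leaves the rest of `μ` in place. -/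
def planOfFlow (μ : V → ℝ) (ρ : V → V → ℝ) (x y : V) : ℝ :=
  ρ x y + if x = y then μ x - ∑ z, ρ x z else 0

lemma isTransportPlan_planOfFlow {ρ : V → V → ℝ} (hμ : ∀ x, μ x ≤ 1) (hρ : ∀ x y, 0 ≤ ρ x y)
    (hout : ∀ x, ∑ y, ρ x y ≤ μ x) (hnet : ∀ x, ∑ y, ρ x y - ∑ y, ρ y x = μ x - ν x) :
    IsTransportPlan μ ν (planOfFlow μ ρ) := by
  have hnonneg : ∀ x y, 0 ≤ planOfFlow μ ρ x y := fun x y =>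
    add_nonneg (hρ x y) (ite_nonneg (sub_nonneg.2 (hout x)) le_rfl)
  have hright : ∀ x, ∑ y, planOfFlow μ ρ x y = μ x := fun x => by
    simp [planOfFlow, sum_add_distrib]
  refine ⟨fun x y => ⟨hnonneg x y, ?_⟩, hright, fun y => ?_⟩
  · calc planOfFlow μ ρ x y ≤ ∑ z, planOfFlow μ ρ x z :=
          single_le_sum (fun z _ => hnonneg x z) (mem_univ y)
      _ ≤ 1 := (hright x).trans_le (hμ x)
  · simp only [planOfFlow, sum_add_distrib, sum_ite_eq', mem_univ, if_true]
    linarith [hnet y]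

theorem W1_eq_of_tight_flow {ρ : V → V → ℝ} (hμ : ∀ x, μ x ≤ 1) (hρ : ∀ x y, 0 ≤ ρ x y)
    (hout : ∀ x, ∑ y, ρ x y ≤ μ x) (hnet : ∀ x, ∑ y, ρ x y - ∑ y, ρ y x = μ x - ν x)
    (hf : ∀ x y, f x - f y ≤ G.dist x y)
    (htight : ∀ x y, ρ x y ≠ 0 → f x - f y = G.dist x y) :
    W1 G μ ν = ∑ x, f x * (μ x - ν x) := by
  refine (isTransportPlan_planOfFlow hμ hρ hout hnet).W1_eq_of_tight hf fun x y hxy => ?_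
  obtain rfl | hne := eq_or_ne x y
  · simp
  · exact htight x y (by simpa [planOfFlow, hne] using hxy)

lemma W1_eq_of_flow_to_sinks (hG : G.Connected) (hμ : ∀ z, μ z ≤ 1) {a c : V → ℝ} {y v : V}
    (ha : 0 ≤ a) (hc : 0 ≤ c) (hac : a + c ≤ μ)
    (hν : ν = μ - (a + c) + Pi.single y (∑ z, a z) + Pi.single v (∑ z, c z))
    (hgeod : ∀ z, a z ≠ 0 → G.dist z v = G.dist z y + G.dist y v) :
    W1 G μ ν = ∑ z, (G.dist z v : ℝ) * (μ z - ν z) := by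
  let ρ : V → V → ℝ := fun z w => (if w = y then a z else 0) + if w = v then c z else 0
  have hout : ∀ z, ∑ w, ρ z w = a z + c z := fun z => by simp [ρ, sum_add_distrib]
  have hin : ∀ w, ∑ z, ρ z w =
      (Pi.single y (∑ z, a z) : V → ℝ) w + (Pi.single v (∑ z, c z) : V → ℝ) w := fun w => by
    simp only [ρ, sum_add_distrib, Pi.single_apply]
    split_ifs <;> simp
  refine W1_eq_of_tight_flow (ρ := ρ) (f := fun z => (G.dist z v : ℝ)) hμ (fun z w => ?_)
    (fun z => (hout z).trans_le (hac z)) (fun z => ?_) (fun z w => ?_) (fun z w hzw => ?_)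
  · exact add_nonneg (ite_nonneg (ha z) le_rfl) (ite_nonneg (hc z) le_rfl)
  · rw [hout, hin, hν]
    simp only [Pi.add_apply, Pi.sub_apply]
    ring
  · rw [sub_le_iff_le_add]
    exact_mod_cast hG.dist_triangle
  · obtain rfl | hwv := eq_or_ne w v
    · simp
    · obtain ⟨rfl, haz⟩ : w = y ∧ a z ≠ 0 := by simpa [ρ, hwv] using hzw
      rw [hgeod z haz]
      push_cast
      ring

theorem W1_eq_sum_dist_mul_sub (hG : G.Connected) (hμ : μ ∈ stdSimplex ℝ V)
    (hν : ν ∈ stdSimplex ℝ V) {x y v : V} {A : ℝ} (hA : 0 ≤ A) (hAμ : A ≤ μ x) (hAν : A ≤ ν y)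
    (hgeod : G.dist x v = G.dist x y + G.dist y v)
    (hle : ∀ z ≠ v, ν z ≤ μ z - (if z = x then A else 0) + if z = y then A else 0) :
    W1 G μ ν = ∑ z, (G.dist z v : ℝ) * (μ z - ν z) := by
  set a : V → ℝ := Pi.single x A with ha
  set b : V → ℝ := Pi.single y A with hb
  -- Once `A` has moved from `x` to `y`, the excess `g` is nonnegative off `v`; its part `c` off `v`
  -- is what has to be sent to `v`.
  set g : V → ℝ := μ - a + b - ν with hg
  set c : V → ℝ := g - Pi.single v (g v) with hc
  have ha_nonneg : 0 ≤ a := Pi.single_nonneg.2 hA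
  have haμ : ∀ z, a z ≤ μ z := fun z => by
    obtain rfl | hz := eq_or_ne z x
    · simpa [ha] using hAμ
    · simpa [ha, hz] using hμ.1 z
  have hbν : ∀ z, b z ≤ ν z := fun z => by
    obtain rfl | hz := eq_or_ne z y
    · simpa [hb] using hAν
    · simpa [hb, hz] using hν.1 z
  have ha_sum : ∑ z, a z = A := by simp [ha]
  have hg_sum : ∑ z, g z = 0 := by
    simp [hg, ha, hb, sum_sub_distrib, sum_add_distrib, hμ.2, hν.2]
  have hc_sum : ∑ z, c z = -g v := by
    simp [hc, sum_sub_distrib, hg_sum]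
  refine W1_eq_of_flow_to_sinks hG (fun z => (mem_Icc_of_mem_stdSimplex hμ z).2)
    (c := c) (y := y) ha_nonneg (fun z => ?_) (fun z => ?_) ?_ (fun z hz => ?_)
  · obtain rfl | hz := eq_or_ne z v
    · simp [hc]
    · simpa [hc, hg, ha, hb, Pi.single_apply, hz] using hle z hz
  · obtain rfl | hz := eq_or_ne z v
    · simpa [hc] using haμ z
    · have hcz : c z = μ z - a z + b z - ν z := by simp [hc, hg, hz]
      rw [Pi.add_apply, hcz]
      linarith [hbν z]
  · rw [ha_sum, hc_sum, ← hb, hc, hg, Pi.single_neg]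
    abel
  · rw [show z = x from by_contra fun h => hz (by simp [ha, h])]
    exact hgeod

end Transport

section AdjacencyPatterns

variable {V : Type*} {G : SimpleGraph V} {x x' : V}

/-- Adjacent twins: adjacent vertices with the same closed neighbourhood. -/
structure IsAdjTwin (G : SimpleGraph V) (x y : V) : Prop where
  adj : G.Adj x y
  adj_iff : ∀ z, z ≠ x → z ≠ y → (G.Adj x z ↔ G.Adj y z)

/-- `G` is a suspension with poles `x` and `x'`: the join of the edgeless graph on `{x, x'}` with
the rest of `G`. -/
structure IsSuspension (G : SimpleGraph V) (x x' : V) : Prop where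
  ne : x ≠ x'
  adj_left_iff : ∀ z, G.Adj x z ↔ z ≠ x ∧ z ≠ x'
  adj_right_iff : ∀ z, G.Adj x' z ↔ z ≠ x ∧ z ≠ x'

namespace IsSuspension

lemma dist_poles (hS : IsSuspension G x x') (hG : G.Connected) : G.dist x x' = 2 := by
  have : Nontrivial V := ⟨x, x', hS.ne⟩
  obtain ⟨y, hxy⟩ := hG.preconnected.exists_adj_of_nontrivial x
  have hx'y : G.Adj x' y := (hS.adj_right_iff y).2 ((hS.adj_left_iff y).1 hxy)
  refine le_antisymm ?_ (hG.one_lt_dist_of_ne_of_not_adj hS.ne fun h => ?_)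
  · exact SimpleGraph.dist_le (.cons hxy hx'y.symm.toWalk)
  · exact ((hS.adj_left_iff x').1 h).2 rfl

lemma dist_right_pole (hS : IsSuspension G x x') (hG : G.Connected) (z : V) :
    (G.dist z x' : ℝ) = 1 + (if z = x then 1 else 0) - if z = x' then 1 else 0 := by
  obtain rfl | hzx := eq_or_ne z x
  · rw [hS.dist_poles hG, if_pos rfl, if_neg hS.ne]
    norm_num
  obtain rfl | hzx' := eq_or_ne z x'
  · simp [hzx]
  · rw [SimpleGraph.dist_eq_one_iff_adj.2 ((hS.adj_right_iff z).2 ⟨hzx, hzx'⟩).symm]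
    simp [hzx, hzx']

end IsSuspension

end AdjacencyPatterns

section Curvature

variable {V : Type*} [Fintype V] {G : SimpleGraph V} {p : ℝ} {x x' y z : V}

lemma deg_eq_degree (G : SimpleGraph V) (x : V) : deg G x = G.degree x := by
  rw [deg, ← G.card_neighborFinset_eq_degree, G.neighborFinset_eq_filter]

lemma deg_pos (hxy : G.Adj x y) : 0 < deg G x := by
  rw [deg_eq_degree, G.degree_pos_iff_exists_adj]
  exact ⟨y, hxy⟩

lemma mu_self (G : SimpleGraph V) (p : ℝ) (x : V) : mu G p x x = p :=
  if_pos rfl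

lemma mu_of_adj (hxz : G.Adj x z) : mu G p x z = (1 - p) / deg G x := by
  rw [mu, if_neg hxz.ne', if_pos hxz]

lemma mu_of_ne_of_not_adj (hzx : z ≠ x) (hxz : ¬ G.Adj x z) : mu G p x z = 0 := by
  rw [mu, if_neg hzx, if_neg hxz]

lemma mu_le_of_ne (hp : p ≤ 1) (hzx : z ≠ x) : mu G p x z ≤ (1 - p) / deg G x := by
  by_cases h : G.Adj x z
  · exact (mu_of_adj h).le
  · rw [mu_of_ne_of_not_adj hzx h]
    exact div_nonneg (sub_nonneg.2 hp) (Nat.cast_nonneg _)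

lemma mu_mem_stdSimplex (hp₀ : 0 ≤ p) (hp₁ : p ≤ 1) (hxy : G.Adj x y) :
    mu G p x ∈ stdSimplex ℝ V := by
  have hdeg : (deg G x : ℝ) ≠ 0 := by exact_mod_cast (deg_pos hxy).ne'
  refine ⟨fun z => ?_, ?_⟩
  · exact ite_nonneg hp₀
      (ite_nonneg (div_nonneg (sub_nonneg.2 hp₁) (Nat.cast_nonneg _)) le_rfl)
  · have hsplit : ∀ z, mu G p x z =
        (if z = x then p else 0) + if G.Adj x z then (1 - p) / deg G x else 0 := fun z => by
      obtain rfl | hz := eq_or_ne z x <;> simp [mu, *]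
    have hcard : (#{z | G.Adj x z} : ℝ) = deg G x := rfl
    simp only [hsplit, sum_add_distrib, sum_ite_eq', mem_univ, if_true, ← sum_filter, sum_const,
      nsmul_eq_mul, hcard]
    rw [mul_div_cancel₀ _ hdeg, add_sub_cancel]

lemma kappaLLY_comm (G : SimpleGraph V) (x y : V) : kappaLLY G x y = kappaLLY G y x := by
  simp only [kappaLLY, kappa, W1_comm G (mu G _ x)]

open Filter Topology in
lemma kappaLLY_eq_of_eventually {k : ℝ}
    (h : ∀ᶠ p in 𝓝[<] (1 : ℝ), W1 G (mu G p x) (mu G p y) = 1 - k * (1 - p)) :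
    kappaLLY G x y = k := by
  refine (tendsto_const_nhds.congr' ?_).limUnder_eq
  filter_upwards [h, self_mem_nhdsWithin] with p hW hp
  rw [kappa, hW, sub_sub_cancel, mul_div_cancel_right₀ _ (sub_pos.2 hp).ne']

namespace IsAdjTwin

lemma deg_eq (h : IsAdjTwin G x y) : deg G x = deg G y := by
  have hclosed : insert x ({z | G.Adj x z} : Finset V) = insert y ({z | G.Adj y z} : Finset V) := by
    ext z
    obtain rfl | hx := eq_or_ne z x
    · simp [h.adj.symm]
    obtain rfl | hy := eq_or_ne z y
    · simp [h.adj]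
    · simp [hx, hy, h.adj_iff z hx hy]
  have hcard := congrArg card hclosed
  rwa [card_insert_of_notMem (by simp), card_insert_of_notMem (by simp),
    Nat.add_right_cancel_iff] at hcard

lemma mu_eq (h : IsAdjTwin G x y) (hzx : z ≠ x) (hzy : z ≠ y) : mu G p x z = mu G p y z := by
  simp only [mu, hzx, hzy, h.adj_iff z hzx hzy, h.deg_eq]

lemma W1_eq (h : IsAdjTwin G x y) (hG : G.Connected) (hp₀ : 1 / 2 ≤ p) (hp₁ : p ≤ 1) :
    W1 G (mu G p x) (mu G p y) = p - (1 - p) / deg G x := by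
  have hq : (1 - p) / deg G x ≤ p :=
    (div_le_self (sub_nonneg.2 hp₁) (by exact_mod_cast deg_pos h.adj)).trans (by linarith)
  have hyx : mu G p y x = (1 - p) / deg G x := by rw [mu_of_adj h.adj.symm, h.deg_eq]
  have hx := mu_mem_stdSimplex (by linarith) hp₁ h.adj
  have hy := mu_mem_stdSimplex (by linarith) hp₁ h.adj.symm
  rw [W1_eq_sum_dist_mul_sub hG hx hy (x := x) (y := x) (v := y) le_rfl (hx.1 x) (hy.1 x)
    (by simp), sum_eq_single x]
  · rw [SimpleGraph.dist_eq_one_iff_adj.2 h.adj, mu_self, hyx, Nat.cast_one, one_mul]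
  · intro z _ hzx
    obtain rfl | hzy := eq_or_ne z y
    · simp
    · rw [h.mu_eq hzx hzy, sub_self, mul_zero]
  · simp
  · intro z hzy
    rw [sub_add_cancel]
    obtain rfl | hzx := eq_or_ne z x
    · rwa [hyx, mu_self]
    · exact (h.mu_eq hzx hzy).ge

theorem kappaLLY_eq (h : IsAdjTwin G x y) (hG : G.Connected) :
    kappaLLY G x y = 1 + 1 / deg G x := by
  refine kappaLLY_eq_of_eventually ?_
  filter_upwards [Ioo_mem_nhdsLT (one_half_lt_one : (1 / 2 : ℝ) < 1)] with p hp
  rw [h.W1_eq hG hp.1.le hp.2.le]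
  ring

end IsAdjTwin

namespace IsSuspension

lemma mu_le_mu_off_right_pole (hS : IsSuspension G x x') (hxy : G.Adj x y)
    (hdeg : deg G x ≤ deg G y) (hp₁ : p ≤ 1) (hzx' : z ≠ x') :
    mu G p y z ≤ mu G p x z - (if z = x then p - (1 - p) / deg G x else 0) +
      if z = y then p - (1 - p) / deg G x else 0 := by
  have hq : (1 - p) / deg G y ≤ (1 - p) / deg G x :=
    div_le_div_of_nonneg_left (sub_nonneg.2 hp₁) (by exact_mod_cast deg_pos hxy)
      (by exact_mod_cast hdeg)
  obtain rfl | hzx := eq_or_ne z x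
  · simpa [mu_self, mu_of_adj hxy.symm, hxy.ne] using hq
  obtain rfl | hzy := eq_or_ne z y
  · simp [mu_self, mu_of_adj hxy, hzx]
  · rw [mu_of_adj ((hS.adj_left_iff z).2 ⟨hzx, hzx'⟩), if_neg hzx, if_neg hzy, sub_zero, add_zero]
    exact (mu_le_of_ne hp₁ hzy).trans hq

lemma W1_eq (hS : IsSuspension G x x') (hG : G.Connected) (hxy : G.Adj x y)
    (hdeg : deg G x ≤ deg G y) (hp₀ : 1 / 2 ≤ p) (hp₁ : p ≤ 1) :
    W1 G (mu G p x) (mu G p y) = p := by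
  have hx'y : G.Adj x' y := (hS.adj_right_iff y).2 ((hS.adj_left_iff y).1 hxy)
  have hx := mu_mem_stdSimplex (by linarith) hp₁ hxy
  have hy := mu_mem_stdSimplex (by linarith) hp₁ hxy.symm
  have hq₀ : 0 ≤ (1 - p) / deg G x := div_nonneg (sub_nonneg.2 hp₁) (Nat.cast_nonneg _)
  have hq₁ : (1 - p) / deg G x ≤ p :=
    (div_le_self (sub_nonneg.2 hp₁) (by exact_mod_cast deg_pos hxy)).trans (by linarith)
  have hgeod : G.dist x x' = G.dist x y + G.dist y x' := by
    rw [hS.dist_poles hG, SimpleGraph.dist_eq_one_iff_adj.2 hxy,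
      SimpleGraph.dist_eq_one_iff_adj.2 hx'y.symm]
  have hxx' : mu G p x x' = 0 :=
    mu_of_ne_of_not_adj hS.ne.symm fun h => ((hS.adj_left_iff x').1 h).2 rfl
  calc W1 G (mu G p x) (mu G p y)
      = ∑ z, (G.dist z x' : ℝ) * (mu G p x z - mu G p y z) :=
        W1_eq_sum_dist_mul_sub hG hx hy (sub_nonneg.2 hq₁) (by rw [mu_self]; linarith)
          (by rw [mu_self]; linarith) hgeod
          fun z hzx' => hS.mu_le_mu_off_right_pole hxy hdeg hp₁ hzx'
    _ = (mu G p x x - mu G p y x) - (mu G p x x' - mu G p y x') := by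
        simp [hS.dist_right_pole hG, add_mul, sub_mul, sum_add_distrib, hx.2, hy.2]
    _ = p := by
        rw [mu_self, hxx', mu_of_adj hxy.symm, mu_of_adj hx'y.symm]
        ring

theorem kappaLLY_eq_one (hS : IsSuspension G x x') (hG : G.Connected) (hxy : G.Adj x y)
    (hdeg : deg G x ≤ deg G y) : kappaLLY G x y = 1 := by
  refine kappaLLY_eq_of_eventually ?_
  filter_upwards [Ioo_mem_nhdsLT (one_half_lt_one : (1 / 2 : ℝ) < 1)] with p hp
  rw [hS.W1_eq hG hxy hdeg hp.1.le hp.2.le, one_mul, sub_sub_cancel]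

end IsSuspension

end Curvature

namespace IsMatchingDeletionOfComplete

section Distance

variable {V : Type*} {G : SimpleGraph V} {x x' : V}

lemma isSuspension (h : IsMatchingDeletionOfComplete G) (hxx' : Gᶜ.Adj x x') :
    IsSuspension G x x' := by
  obtain ⟨M, hsymm, -, hunique, hadj⟩ := h
  have hM : M x x' := by_contra fun hM => hxx'.2 ((hadj x x').2 ⟨hxx'.1, hM⟩)
  refine ⟨hxx'.1, fun z => ?_, fun z => ?_⟩
  · rw [hadj, ne_comm]
    exact and_congr_right fun _ => not_congr ⟨fun hz => hunique _ _ _ hz hM, fun hz => hz ▸ hM⟩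
  · rw [hadj, and_comm, ne_comm (a := x')]
    refine and_congr_left fun _ => not_congr ⟨fun hz => ?_, fun hz => hz ▸ hsymm hM⟩
    exact hunique _ _ _ hz (hsymm hM)

lemma dist_le_two (h : IsMatchingDeletionOfComplete G) (hG : G.Connected) (x y : V) :
    G.dist x y ≤ 2 := by
  obtain rfl | hne := eq_or_ne x y
  · simp
  by_cases hxy : G.Adj x y
  · simp [SimpleGraph.dist_eq_one_iff_adj.2 hxy]
  · exact ((h.isSuspension ⟨hne, hxy⟩).dist_poles hG).le

end Distance

variable {V : Type*} [Fintype V] {G : SimpleGraph V} {x x' y : V}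

lemma deg_le_deg (h : IsMatchingDeletionOfComplete G) (hxx' : Gᶜ.Adj x x') (y : V) :
    deg G x ≤ deg G y := by
  have hx : 1 ≤ Gᶜ.degree x := (Gᶜ.degree_pos_iff_exists_adj x).2 ⟨x', hxx'⟩
  have hy : Gᶜ.degree y ≤ 1 := by
    rw [← Gᶜ.card_neighborFinset_eq_degree, card_le_one]
    intro z hz w hw
    rw [SimpleGraph.mem_neighborFinset] at hz hw
    exact by_contra fun hzw => hw.2 (((h.isSuspension hz).adj_left_iff w).2 ⟨hw.ne', Ne.symm hzw⟩)
  rw [G.degree_compl] at hx hy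
  rw [deg_eq_degree, deg_eq_degree]
  omega

lemma kappaLLY_eq_one (h : IsMatchingDeletionOfComplete G) (hG : G.Connected)
    (hxx' : Gᶜ.Adj x x') (hxy : G.Adj x y) : kappaLLY G x y = 1 :=
  (h.isSuspension hxx').kappaLLY_eq_one hG hxy (h.deg_le_deg hxx' y)

lemma one_le_kappaLLY (h : IsMatchingDeletionOfComplete G) (hG : G.Connected)
    (hxy : G.Adj x y) : 1 ≤ kappaLLY G x y := by
  by_cases hx : ∃ x', Gᶜ.Adj x x'
  · obtain ⟨x', hxx'⟩ := hx
    exact (h.kappaLLY_eq_one hG hxx' hxy).ge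
  by_cases hy : ∃ y', Gᶜ.Adj y y'
  · obtain ⟨y', hyy'⟩ := hy
    rw [kappaLLY_comm]
    exact (h.kappaLLY_eq_one hG hyy' hxy.symm).ge
  · have htwin : IsAdjTwin G x y := ⟨hxy, fun z hzx hzy => by
      simp only [SimpleGraph.compl_adj, not_exists, not_and, not_not] at hx hy
      exact iff_of_true (hx z hzx.symm) (hy z hzy.symm)⟩
    rw [htwin.kappaLLY_eq hG]
    exact le_add_of_nonneg_right (by positivity)

theorem sInf_kappaLLY (h : IsMatchingDeletionOfComplete G) (hG : G.Connected) (hne : G ≠ ⊤) :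
    sInf {r : ℝ | ∃ x y, G.Adj x y ∧ r = kappaLLY G x y} = 1 := by
  obtain ⟨x, x', hxx'⟩ := SimpleGraph.ne_top_iff_exists_not_adj.1 hne
  have : Nontrivial V := ⟨x, x', hxx'.1⟩
  obtain ⟨y, hxy⟩ := hG.preconnected.exists_adj_of_nontrivial x
  refine IsLeast.csInf_eq ⟨⟨x, y, hxy, (h.kappaLLY_eq_one hG hxx' hxy).symm⟩, ?_⟩
  rintro _ ⟨u, v, huv, rfl⟩
  exact h.one_le_kappaLLY hG huv

theorem diam_eq_two (h : IsMatchingDeletionOfComplete G) (hG : G.Connected) (hne : G ≠ ⊤) :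
    diam G = 2 := by
  obtain ⟨x, x', hxx'⟩ := SimpleGraph.ne_top_iff_exists_not_adj.1 hne
  refine le_antisymm (Finset.sup_le fun _ _ => h.dist_le_two hG _ _) ?_
  rw [← (h.isSuspension hxx').dist_poles hG]
  exact le_sup (f := fun xy : V × V => G.dist xy.1 xy.2) (mem_univ (x, x'))

end IsMatchingDeletionOfComplete

section Gab

lemma isMatchingDeletionOfComplete_Gab (a b : ℕ) : IsMatchingDeletionOfComplete (Gab a b) := by
  refine ⟨fun x y => x ≠ y ∧ (x : ℕ) < 2 * a ∧ (y : ℕ) < 2 * a ∧ (x : ℕ) / 2 = (y : ℕ) / 2,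
    fun x y h => ⟨h.1.symm, h.2.2.1, h.2.1, h.2.2.2.symm⟩, fun x h => h.1 rfl,
    fun x y z => ?_, fun x y => ?_⟩
  · simp only [ne_eq, Fin.ext_iff]
    omega
  · exact and_congr_right fun hne => not_congr (and_iff_right hne).symm

variable {a b : ℕ}

lemma Gab_connected (hb : 0 < b) : (Gab a b).Connected := by
  let v : Fin (2 * a + b) := ⟨2 * a, by omega⟩
  have hv : ∀ z, (Gab a b).Reachable v z := fun z => by
    obtain rfl | hz := eq_or_ne v z
    · rfl
    · exact SimpleGraph.Adj.reachable ⟨hz, fun h => lt_irrefl _ h.1⟩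
  have : Nonempty (Fin (2 * a + b)) := ⟨v⟩
  exact ⟨fun z w => (hv z).symm.trans (hv w)⟩

lemma Gab_ne_top (ha : 0 < a) : Gab a b ≠ ⊤ :=
  SimpleGraph.ne_top_iff_exists_not_adj.2 ⟨⟨0, by omega⟩, ⟨1, by omega⟩,
    by simp, fun h => h.2 ⟨by simpa using ha, by simp; omega, by simp⟩⟩

end Gab

theorem stmt4_general {V : Type*} [Fintype V] {G : SimpleGraph V}
    (h : IsMatchingDeletionOfComplete G) (hG : G.Connected) (hne : G ≠ ⊤) :
    sInf {r : ℝ | ∃ x y, G.Adj x y ∧ r = kappaLLY G x y} = 1 ∧ diam G = 2 ∧ BMSharp G := by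
  have hinf := h.sInf_kappaLLY hG hne
  have hdiam := h.diam_eq_two hG hne
  refine ⟨hinf, hdiam, ?_⟩
  rw [BMSharp, hinf, hdiam]
  norm_num

/-- For all positive integers `a`, `b`, the graph `G(a,b)` has infimal edge
curvature `1`, diameter `2`, and is therefore Bonnet-Myers sharp. -/
theorem stmt4 (a b : ℕ) (ha : 0 < a) (hb : 0 < b) :
    sInf {r : ℝ | ∃ x y, (Gab a b).Adj x y ∧ r = kappaLLY (Gab a b) x y} = 1 ∧
    diam (Gab a b) = 2 ∧
    BMSharp (Gab a b) :=
  stmt4_general (isMatchingDeletionOfComplete_Gab a b) (Gab_connected hb) (Gab_ne_top ha)
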